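/- arXiv:1801.09789 — 3 statements merged into one kernel-verified Lean document; each statement's English description precedes it below -/
import Mathlib

section
/- Let p ∈ [0,1), b₁ > 0, c > 0, and let (r_j)_{j≥1} be an increasing sequence of positive real numbers satisfying |r_j − r_n| ≥ c · max(r_j^p, r_n^p) · |j − n| for all j, n ≥ 1. Then there exists a constant C > 0, depending only on b₁ and c, such that for every t > 0 with |t − r_j| ≥ b₁ r_j^p for all j, the series Σ_{j=1}^∞ r_j^{2p}/(t − r_j)² converges and Σ_{j=1}^∞ r_j^{2p}/(t − r_j)² ≤ C. -/
lemma term_bound (b c x d k : ℝ) (hb : 0 < b) (hc : 0 < c) (hx : 0 < x) (hk : 0 ≤ k)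
    (h1 : b * x ≤ |d|) (h2 : c * x * k ≤ |d|) :
    x ^ 2 / d ^ 2 ≤ (if k = 0 then 1 / b ^ 2 else 0) + 1 / c ^ 2 * (1 / k ^ 2) := by
  have hd : 0 < |d| := lt_of_lt_of_le (by positivity) h1
  rw [← sq_abs d]
  split_ifs with h
  · subst h
    have : x ^ 2 / |d| ^ 2 ≤ 1 / b ^ 2 := by
      rw [div_le_div_iff₀ (by positivity) (by positivity)]
      have := pow_le_pow_left₀ (by positivity) h1 2
      nlinarith
    simpa using this
  · have hk' : 0 < k := lt_of_le_of_ne hk (Ne.symm h)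
    have : x ^ 2 / |d| ^ 2 ≤ 1 / (c ^ 2 * k ^ 2) := by
      rw [div_le_div_iff₀ (by positivity) (by positivity)]
      have := pow_le_pow_left₀ (by positivity) h2 2
      nlinarith
    rw [zero_add, one_div_mul_one_div]
    exact this

/-- Let `p ∈ [0,1)`, `b₁ > 0`, `c > 0`, and let `(r_j)` be an increasing
sequence of positive reals with `|r_j − r_n| ≥ c·max(r_j^p, r_n^p)·|j − n|` for all `j, n`.
Then there is a constant `C > 0`, depending only on `b₁` and `c`, such that for every `t > 0`
with `|t − r_j| ≥ b₁ r_j^p` for all `j`, the series `Σ_j r_j^{2p}/(t − r_j)²` converges and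
its sum is at most `C`. -/
theorem stmt15 (b₁ c : ℝ) (hb₁ : 0 < b₁) (hc : 0 < c) :
    ∃ C : ℝ, 0 < C ∧
      ∀ p : ℝ, p ∈ Set.Ico (0 : ℝ) 1 →
      ∀ r : ℕ → ℝ, (∀ j, 0 < r j) → StrictMono r →
        (∀ j n : ℕ, c * max (r j ^ p) (r n ^ p) * |(j : ℝ) - (n : ℝ)| ≤ |r j - r n|) →
        ∀ t : ℝ, 0 < t → (∀ j, b₁ * r j ^ p ≤ |t - r j|) →
          Summable (fun j : ℕ => r j ^ (2 * p) / (t - r j) ^ 2) ∧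
          (∑' j : ℕ, r j ^ (2 * p) / (t - r j) ^ 2) ≤ C := by
  set A : ℕ → ℝ := fun k =>
    (if (k : ℝ) = 0 then 1 / b₁ ^ 2 else 0) + 1 / c ^ 2 * (1 / (k : ℝ) ^ 2) with hA
  have hA0 : ∀ k, 0 ≤ A k := by
    intro k
    simp only [hA]
    split_ifs <;> positivity
  have hAs : Summable A := by
    apply Summable.add
    · apply summable_of_ne_finset_zero (s := {0})
      intro k hk
      simp at hk
      simp [hk]
    · exact (Real.summable_one_div_nat_pow.mpr (by norm_num)).mul_left _
  have hT : 0 ≤ ∑' k, A k := tsum_nonneg hA0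
  refine ⟨2 * (∑' k, A k) + 1, by linarith, ?_⟩
  intro p hp r hr hmono hsep t ht hgap
  have hx : ∀ j, 0 < r j ^ p := fun j => Real.rpow_pos_of_pos (hr j) p
  have hsq : ∀ j, r j ^ (2 * p) = (r j ^ p) ^ 2 := by
    intro j
    rw [mul_comm, Real.rpow_mul (hr j).le]
    norm_num
  have hex : ∃ N, t < r N := by
    obtain ⟨n, hn⟩ := exists_nat_gt (t / (c * r 0 ^ p))
    have h0 : 0 < c * r 0 ^ p := mul_pos hc (hx 0)
    refine ⟨n, ?_⟩
    rw [div_lt_iff₀ h0] at hn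
    have h1 := hsep n 0
    rw [abs_of_nonneg (sub_nonneg.2 (hmono.monotone (Nat.zero_le n)))] at h1
    have h2 : c * r 0 ^ p * n ≤ c * max (r n ^ p) (r 0 ^ p) * |(n : ℝ) - ((0 : ℕ) : ℝ)| := by
      simp only [Nat.cast_zero, sub_zero, Nat.abs_cast]
      gcongr
      exact le_max_right _ _
    have := hr 0
    nlinarith
  classical
  set N := Nat.find hex with hN
  have hNt : t < r N := Nat.find_spec hex
  have hlt : ∀ j, j < N → r j ≤ t := fun j hj => not_lt.1 (Nat.find_min hex hj)
  have hsep' : ∀ j n : ℕ, c * r j ^ p * |(j : ℝ) - (n : ℝ)| ≤ |r j - r n| := by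
    intro j n
    refine le_trans ?_ (hsep j n)
    gcongr
    exact le_max_left _ _
  set f : ℕ → ℝ := fun j => r j ^ (2 * p) / (t - r j) ^ 2 with hf
  have hup : ∀ i, f (i + N) ≤ A i := by
    intro i
    simp only [hf, hA, hsq]
    apply term_bound _ _ _ _ _ hb₁ hc (hx _) (Nat.cast_nonneg i) (hgap _)
    have h := hsep' (i + N) N
    have hm : r N ≤ r (i + N) := hmono.monotone (by omega)
    rw [abs_of_nonneg (sub_nonneg.2 hm)] at h
    rw [abs_of_nonpos (by linarith)]
    push_cast at h
    rw [add_sub_cancel_right, Nat.abs_cast] at h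
    linarith
  have hlow : ∀ j ∈ Finset.range N, f j ≤ A (N - 1 - j) := by
    intro j hj
    have hj := Finset.mem_range.1 hj
    simp only [hf, hA, hsq]
    apply term_bound _ _ _ _ _ hb₁ hc (hx _) (Nat.cast_nonneg _) (hgap _)
    have h := hsep' j (N - 1)
    have hm : r j ≤ r (N - 1) := hmono.monotone (by omega)
    have hl := hlt (N - 1) (by omega)
    rw [abs_of_nonpos (sub_nonpos.2 hm)] at h
    rw [abs_of_nonneg (by linarith)]
    rw [abs_sub_comm, ← Nat.cast_sub (by omega), Nat.abs_cast] at h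
    linarith
  have hfs' : Summable (fun i => f (i + N)) := by
    refine Summable.of_nonneg_of_le (fun i => ?_) hup hAs
    simp only [hf, hsq]
    positivity
  have hfs : Summable f := (summable_nat_add_iff N).1 hfs'
  refine ⟨hfs, ?_⟩
  rw [← hfs.sum_add_tsum_nat_add N]
  have h1 := hfs'.tsum_le_tsum hup hAs
  have h2 := Finset.sum_le_sum hlow
  rw [Finset.sum_range_reflect] at h2
  have h3 := hAs.sum_le_tsum (Finset.range N) (fun i _ => hA0 i)
  linarith
end

section
/- Let p ∈ [0,1), b₁ > 0, c > 0, a > 0, and let (r_j)_{j≥1} be an increasing sequence of positive real numbers satisfying |r_j − r_n| ≥ c · max(r_j^p, r_n^p) · |j − n| for all j, n ≥ 1, and r_j^{1−p} ≥ a·j for all j ≥ 1. Then there exists a constant C > 0, depending only on b₁, c and a, such that for every t > 0 with |t − r_j| ≥ b₁ r_j^p for all j, one has Σ_{j=1}^∞ t² r_j^{2p−2}/(t − r_j)² ≤ C. -/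
noncomputable def auxG (z : ℤ) : ℝ := 1 / (|(z : ℝ)| + 1) ^ 2

lemma auxG_nonneg (z : ℤ) : 0 ≤ auxG z := by unfold auxG; positivity

lemma auxG_summable : Summable auxG := by
  have h : Summable (fun n : ℕ => 1 / ((n : ℝ) + 1) ^ 2) := by
    have := (summable_nat_add_iff 1).mpr (Real.summable_one_div_nat_pow (p := 2) |>.mpr (by norm_num))
    simpa using this
  apply Summable.of_nat_of_neg
  · simpa [auxG] using h
  · simpa [auxG] using h

lemma auxG_shift (k : ℤ) : Summable (fun j : ℕ => auxG ((j : ℤ) + k)) ∧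
    ∑' j : ℕ, auxG ((j : ℤ) + k) ≤ ∑' z, auxG z := by
  have hi : Function.Injective (fun j : ℕ => (j : ℤ) + k) := by
    intro x y h
    simpa using h
  exact ⟨auxG_summable.comp_injective hi,
    tsum_comp_le_tsum_of_inj auxG_summable auxG_nonneg hi⟩

/-- distance bound gives a term bound -/
lemma aux_term (b c m u D d : ℝ) (z : ℤ) (hu : 0 < u) (hm : 0 < m) (hmb : m ≤ b) (hmc : m ≤ c)
    (hd : |(z : ℝ)| = d) (h1 : b * u ≤ D) (h2 : c * u * d ≤ D) :
    (u / D) ^ 2 ≤ 4 / m ^ 2 * auxG z := by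
  have hd0 : 0 ≤ d := hd ▸ abs_nonneg _
  have e1 : m * u ≤ b * u := by gcongr
  have e2 : m * u * d ≤ c * u * d := by gcongr
  have hD : m * u * (d + 1) / 2 ≤ D := by nlinarith
  have : u / D ≤ 2 / (m * (d + 1)) := by
    have hpos : 0 < m * u * (d + 1) / 2 := by positivity
    calc u / D ≤ u / (m * u * (d + 1) / 2) := by gcongr
      _ = _ := by field_simp
  have hDp : 0 < D := lt_of_lt_of_le (by positivity) hD
  calc (u / D) ^ 2 ≤ (2 / (m * (d + 1))) ^ 2 := by gcongr
    _ = _ := by rw [auxG, hd]; field_simp; norm_num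


/-- Let `p ∈ [0,1)`, `b₁, c, a > 0`, and let `(r_j)_{j≥1}` be an increasing
sequence of positive reals with `|r_j − r_n| ≥ c·max(r_j^p, r_n^p)·|j − n|` and
`r_j^{1−p} ≥ a·j` (here indexed from `0`, so `r_j^{1−p} ≥ a(j+1)`).  Then there is a constant
`C > 0`, depending only on `b₁`, `c` and `a`, such that for every `t > 0` with
`|t − r_j| ≥ b₁ r_j^p` for all `j`, one has `Σ_j t² r_j^{2p−2}/(t − r_j)² ≤ C`. -/
theorem stmt16 (b₁ c a : ℝ) (hb₁ : 0 < b₁) (hc : 0 < c) (ha : 0 < a) :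
    ∃ C : ℝ, 0 < C ∧
      ∀ p : ℝ, p ∈ Set.Ico (0 : ℝ) 1 →
      ∀ r : ℕ → ℝ, (∀ j, 0 < r j) → StrictMono r →
        (∀ j n : ℕ, c * max (r j ^ p) (r n ^ p) * |(j : ℝ) - (n : ℝ)| ≤ |r j - r n|) →
        (∀ j : ℕ, a * ((j : ℝ) + 1) ≤ r j ^ (1 - p)) →
        ∀ t : ℝ, 0 < t → (∀ j, b₁ * r j ^ p ≤ |t - r j|) →
          Summable (fun j : ℕ => t ^ 2 * r j ^ (2 * p - 2) / (t - r j) ^ 2) ∧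
          (∑' j : ℕ, t ^ 2 * r j ^ (2 * p - 2) / (t - r j) ^ 2) ≤ C := by
  obtain ⟨m, hm, hmb, hmc⟩ : ∃ m : ℝ, 0 < m ∧ m ≤ b₁ ∧ m ≤ c :=
    ⟨min b₁ c, lt_min hb₁ hc, min_le_left _ _, min_le_right _ _⟩
  set S := ∑' z, auxG z with hS
  have hS0 : 0 ≤ S := tsum_nonneg auxG_nonneg
  refine ⟨2 / a ^ 2 * S + 8 / m ^ 2 * (S + S) + 1, by positivity, ?_⟩
  intro p hp r hr hmono hsep hgrow t ht hdist
  have hp0 := hp.1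
  have hup : ∀ j, 0 < r j ^ p := fun j => Real.rpow_pos_of_pos (hr j) p
  have hex : ∃ N, t < r N := by
    have hk : 0 < c * r 0 ^ p := mul_pos hc (hup 0)
    obtain ⟨n, hn⟩ := exists_nat_gt (t / (c * r 0 ^ p))
    refine ⟨n, ?_⟩
    rw [div_lt_iff₀ hk] at hn
    have h1 := hsep n 0
    have h0 : r 0 ≤ r n := hmono.monotone (Nat.zero_le n)
    rw [abs_of_nonneg (sub_nonneg.mpr h0)] at h1
    simp only [Nat.cast_zero, sub_zero, Nat.abs_cast] at h1
    have h2 : c * r 0 ^ p * n ≤ c * max (r n ^ p) (r 0 ^ p) * n := by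
      gcongr; exact le_max_right _ _
    have := hr 0
    nlinarith
  obtain ⟨N, hN, hNmin⟩ : ∃ N, t < r N ∧ ∀ k < N, r k ≤ t := by
    classical
    exact ⟨Nat.find hex, Nat.find_spec hex, fun k hk => not_lt.mp (Nat.find_min hex hk)⟩
  have hkey : ∀ j : ℕ, (r j ^ p / |t - r j|) ^ 2 ≤
      4 / m ^ 2 * (auxG ((j : ℤ) + (-(N : ℤ))) + auxG ((j : ℤ) + (1 - (N : ℤ)))) := by
    intro j
    have g1 := auxG_nonneg ((j : ℤ) + (-(N : ℤ)))
    have g2 := auxG_nonneg ((j : ℤ) + (1 - (N : ℤ)))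
    have hm4 : 0 ≤ 4 / m ^ 2 := by positivity
    rcases le_or_gt N j with hj | hj
    · have hrj : r N ≤ r j := hmono.monotone hj
      have h2 : c * r j ^ p * |(j : ℝ) - N| ≤ |t - r j| := by
        have h := hsep j N
        rw [abs_of_nonneg (sub_nonneg.mpr hrj)] at h
        have h3 : c * r j ^ p * |(j : ℝ) - N| ≤ c * max (r j ^ p) (r N ^ p) * |(j : ℝ) - N| := by
          gcongr; exact le_max_left _ _
        have h4 := neg_abs_le (t - r j)
        linarith
      have := aux_term b₁ c m (r j ^ p) |t - r j| _ ((j : ℤ) + (-(N : ℤ))) (hup j) hm hmb hmc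
        (by push_cast; rw [← sub_eq_add_neg]) (hdist j) h2
      nlinarith
    · obtain ⟨K, rfl⟩ : ∃ K, N = K + 1 := ⟨N - 1, by omega⟩
      have hrj : r j ≤ r K := hmono.monotone (by omega)
      have hK := hNmin K (by omega)
      have h2 : c * r j ^ p * |(j : ℝ) - K| ≤ |t - r j| := by
        have h := hsep j K
        rw [abs_sub_comm (r j), abs_of_nonneg (sub_nonneg.mpr hrj)] at h
        have h3 : c * r j ^ p * |(j : ℝ) - K| ≤ c * max (r j ^ p) (r K ^ p) * |(j : ℝ) - K| := by
          gcongr; exact le_max_left _ _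
        have h4 := le_abs_self (t - r j)
        linarith
      have := aux_term b₁ c m (r j ^ p) |t - r j| _ ((j : ℤ) + (1 - ((K + 1 : ℕ) : ℤ))) (hup j)
        hm hmb hmc (by push_cast; congr 1; ring) (hdist j) h2
      nlinarith
  have hbound : ∀ j : ℕ, t ^ 2 * r j ^ (2 * p - 2) / (t - r j) ^ 2 ≤
      2 / a ^ 2 * auxG ((j : ℤ) + 0) +
      8 / m ^ 2 * (auxG ((j : ℤ) + (-(N : ℤ))) + auxG ((j : ℤ) + (1 - (N : ℤ)))) := by
    intro j
    have hrj := hr j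
    have hne : t - r j ≠ 0 := by
      have : 0 < |t - r j| := lt_of_lt_of_le (mul_pos hb₁ (hup j)) (hdist j)
      exact abs_pos.mp this
    have e1 : r j ^ (2 * p - 2) = (r j ^ p / r j) ^ 2 := by
      rw [← Real.rpow_sub_one hrj.ne', ← Real.rpow_natCast, ← Real.rpow_mul hrj.le]
      congr 1; push_cast; ring
    have e2 : t ^ 2 * r j ^ (2 * p - 2) / (t - r j) ^ 2 =
        (r j ^ p / r j + r j ^ p / (t - r j)) ^ 2 := by
      rw [e1]; field_simp; ring
    have e3 : (r j ^ p / (t - r j)) ^ 2 = (r j ^ p / |t - r j|) ^ 2 := by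
      rw [div_pow, div_pow, sq_abs]
    have e4 : (r j ^ p / r j) ^ 2 ≤ 1 / a ^ 2 * auxG ((j : ℤ) + 0) := by
      have h := hgrow j
      rw [Real.rpow_sub hrj, Real.rpow_one] at h
      have h5 : r j ^ p / r j ≤ 1 / (a * ((j : ℝ) + 1)) := by
        rw [← one_div_div (r j)]
        exact one_div_le_one_div_of_le (by positivity) h
      have h6 : 0 ≤ r j ^ p / r j := (div_pos (hup j) hrj).le
      calc (r j ^ p / r j) ^ 2 ≤ (1 / (a * ((j : ℝ) + 1))) ^ 2 := by gcongr
        _ = _ := by simp [auxG]; field_simp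
    have e5 := hkey j
    have e6 := sq_nonneg (r j ^ p / r j - r j ^ p / (t - r j))
    rw [e2]
    have : 2 / a ^ 2 * auxG ((j : ℤ) + 0) = 2 * (1 / a ^ 2 * auxG ((j : ℤ) + 0)) := by ring
    rw [this, show 8 / m ^ 2 = 2 * (4 / m ^ 2) by ring, mul_assoc 2]
    rw [← e3] at e5
    nlinarith
  obtain ⟨s0, l0⟩ := auxG_shift 0
  obtain ⟨s1, l1⟩ := auxG_shift (-(N : ℤ))
  obtain ⟨s2, l2⟩ := auxG_shift (1 - (N : ℤ))
  have sR := (s0.mul_left (2 / a ^ 2)).add ((s1.add s2).mul_left (8 / m ^ 2))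
  have hsum : Summable (fun j : ℕ => t ^ 2 * r j ^ (2 * p - 2) / (t - r j) ^ 2) := by
    refine Summable.of_nonneg_of_le (fun j => ?_) hbound sR
    have := (Real.rpow_pos_of_pos (hr j) (2 * p - 2)).le
    positivity
  refine ⟨hsum, (hsum.tsum_le_tsum hbound sR).trans ?_⟩
  rw [(s0.mul_left (2 / a ^ 2)).tsum_add ((s1.add s2).mul_left (8 / m ^ 2)), tsum_mul_left,
    tsum_mul_left, s1.tsum_add s2]
  have : 2 / a ^ 2 * ∑' j : ℕ, auxG ((j : ℤ) + 0) ≤ 2 / a ^ 2 * S := by gcongr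
  have : 8 / m ^ 2 * (∑' j : ℕ, auxG ((j : ℤ) + (-(N : ℤ))) + ∑' j : ℕ, auxG ((j : ℤ) + (1 - (N : ℤ))))
    ≤ 8 / m ^ 2 * (S + S) := by gcongr
  linarith
end

section
/- Let T be a self-adjoint operator in a complex Hilbert space H with domain D(T) whose spectrum is contained in the union of pairwise disjoint intervals Δ_k = [α_{2k−1}, α_{2k}], k ∈ ℤ, whose gaps satisfy α_{2k+1} − α_{2k} ≥ 2^{1−p}·b₁·|α_{2k+1} + α_{2k}|^p for some b₁ > 0 and p ∈ [0,1). Let B be a linear operator defined on D(T) that is p-subordinate to T with subordination bound b', and assume b₁ > b'. Then for every δ ∈ (0, b₁ − b') there exist N ∈ ℕ and C > 0 such that for every k with |k| ≥ N, every λ in the vertical strip Ω_k = {λ ∈ ℂ : |Re λ − r_k| ≤ δ|r_k|^p}, where r_k = (α_{2k} + α_{2k+1})/2, belongs to the resolvent set of A = T + B, and ‖(A − λ)^{−1}‖ ≤ C·|r_k|^{−p} for all λ ∈ Ω_k. -/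
noncomputable section

variable {H : Type*} [NormedAddCommGroup H] [InnerProductSpace ℂ H] [CompleteSpace H]

/-- `R` is a two-sided bounded inverse of `T - z` (so `z` is in the resolvent set of `T`). -/
def IsResolventOf (T : H →ₗ.[ℂ] H) (z : ℂ) (R : H →L[ℂ] H) : Prop :=
  (∀ x : T.domain, R (T x - z • (x : H)) = (x : H)) ∧
  (∀ y : H, ∃ hy : R y ∈ T.domain, T ⟨R y, hy⟩ - z • (R y) = y)

/-- The resolvent set of the (in general unbounded) operator `T`. -/
def pmResolventSet (T : H →ₗ.[ℂ] H) : Set ℂ := {z | ∃ R, IsResolventOf T z R}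

/-- The spectrum of the (in general unbounded) operator `T`. -/
def pmSpectrum (T : H →ₗ.[ℂ] H) : Set ℂ := (pmResolventSet T)ᶜ

/-- The set of constants `b` for which `B` is `p`-subordinate to `T` with some admissible
constant `M ≥ 0` (with `M = 0` required when `p = 0`); the subordination bound `b'` is the
infimum of this set. -/
def SubordSet (T B : H →ₗ.[ℂ] H) (hle : T.domain ≤ B.domain) (p : ℝ) : Set ℝ :=
  {b | 0 < b ∧ ∃ M : ℝ, 0 ≤ M ∧ (p = 0 → M = 0) ∧
    ∀ x : T.domain, ‖B ⟨(x : H), hle x.2⟩‖ ≤ b * ‖T x‖ ^ p * ‖(x : H)‖ ^ (1 - p) + M * ‖(x : H)‖}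

/-- The operator sum `A = T + B` defined on the domain of `T`. -/
def pmSum (T B : H →ₗ.[ℂ] H) (hle : T.domain ≤ B.domain) : H →ₗ.[ℂ] H :=
  ⟨T.domain, T.toFun + B.toFun.comp (Submodule.inclusion hle)⟩

theorem aux_symm {T : H →ₗ.[ℂ] H} (hsa : IsSelfAdjoint T) (x y : T.domain) :
    inner ℂ (T x) (y : H) = inner ℂ (x : H) (T y) := by
  have h := LinearPMap.adjoint_isFormalAdjoint hsa.dense_domain
  rw [LinearPMap.isSelfAdjoint_def.mp hsa] at h
  exact h x y

theorem aux_resolvent_norm {T : H →ₗ.[ℂ] H} (hsa : IsSelfAdjoint T) (c d : ℝ) (hd : 0 < d)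
    (R : H →L[ℂ] H) (hR : IsResolventOf T (c : ℂ) R)
    (hball : ∀ w : ℂ, ‖w - c‖ < d → ∃ S, IsResolventOf T w S) : ‖R‖ ≤ d⁻¹ := by
  have hself : IsSelfAdjoint R := by
    rw [ContinuousLinearMap.isSelfAdjoint_iff_isSymmetric]
    intro u v
    obtain ⟨hu, hu'⟩ := hR.2 u
    obtain ⟨hv, hv'⟩ := hR.2 v
    have h := aux_symm hsa ⟨R u, hu⟩ ⟨R v, hv⟩
    simp only at h
    change inner ℂ (R u) v = inner ℂ u (R v)
    conv_lhs => rw [← hv']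
    conv_rhs => rw [← hu']
    rw [inner_sub_left, inner_sub_right, h, inner_smul_left, inner_smul_right]
    simp
  have hs := ContinuousLinearMap.spectralRadius_eq_nnnorm R hself
  have hle : spectralRadius ℂ R ≤ ((Real.toNNReal d⁻¹ : NNReal) : ENNReal) := by
    refine iSup₂_le fun μ hμ => ?_
    rw [ENNReal.coe_le_coe, ← NNReal.coe_le_coe, Real.coe_toNNReal _ (by positivity), coe_nnnorm]
    by_contra hlt
    push Not at hlt
    have hμ0 : μ ≠ 0 := by
      rintro rfl
      have : 0 < d⁻¹ := by positivity
      simp at hlt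
      linarith
    obtain ⟨S, hS⟩ := hball (c + μ⁻¹) (by
      rw [add_sub_cancel_left, norm_inv]
      exact inv_lt_of_inv_lt₀ hd hlt)
    have h1 : ∀ y, R (y + μ⁻¹ • S y) = S y := by
      intro y
      obtain ⟨hy, hy'⟩ := hS.2 y
      have := hR.1 ⟨S y, hy⟩
      simp only at this
      conv_rhs => rw [← this]
      congr 1
      rw [sub_eq_iff_eq_add] at hy'
      rw [hy', add_smul]
      abel
    have h2 : ∀ y, S (y - μ⁻¹ • R y) = R y := by
      intro y
      obtain ⟨hy, hy'⟩ := hR.2 y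
      have := hS.1 ⟨R y, hy⟩
      simp only at this
      conv_rhs => rw [← this]
      congr 1
      rw [sub_eq_iff_eq_add] at hy'
      rw [hy', add_smul]
      abel
    apply hμ
    rw [spectrum.mem_resolventSet_iff, Algebra.algebraMap_eq_smul_one]
    refine ⟨⟨μ • 1 - R, μ⁻¹ • (1 + μ⁻¹ • S), ?_, ?_⟩, rfl⟩
    · ext y
      have := h1 y
      simp only [map_add, map_smul] at this
      simp [smul_smul, hμ0, smul_add]
      rw [← smul_smul, ← smul_add, this]
      abel
    · ext y
      change μ⁻¹ • ((μ • y - R y) + μ⁻¹ • S (μ • y - R y)) = y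
      have h3 : μ • y - R y = μ • (y - μ⁻¹ • R y) := by
        rw [smul_sub, smul_inv_smul₀ hμ0]
      rw [h3, map_smul, h2, inv_smul_smul₀ hμ0, ← h3, sub_add_cancel, inv_smul_smul₀ hμ0]
  rw [hs, ENNReal.coe_le_coe, ← NNReal.coe_le_coe, Real.coe_toNNReal _ (by positivity),
    coe_nnnorm] at hle
  exact hle

theorem aux_norm_re {T : H →ₗ.[ℂ] H} (hsa : IsSelfAdjoint T) (z : ℂ) (x : T.domain) :
    ‖T x - (z.re : ℂ) • (x : H)‖ ≤ ‖T x - z • (x : H)‖ := by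
  set w := T x - (z.re : ℂ) • (x : H) with hw
  have h1 : T x - z • (x : H) = w - (z.im * Complex.I) • (x : H) := by
    rw [hw]
    conv_lhs => rw [← Complex.re_add_im z]
    rw [add_smul]; abel
  have h2 : (inner ℂ w (x : H)).im = 0 := by
    have : (inner ℂ (T x) (x : H)).im = 0 := by
      rw [← Complex.conj_eq_iff_im, inner_conj_symm]
      exact (aux_symm hsa x x).symm
    rw [hw, inner_sub_left, Complex.sub_im, this, inner_smul_left,
      inner_self_eq_norm_sq_to_K]
    simp [← Complex.ofReal_pow]
  rw [h1]
  refine le_of_sq_le_sq ?_ (norm_nonneg _)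
  clear_value w
  rw [@norm_sub_sq ℂ _ _ _ _ w, inner_smul_right]
  have : RCLike.re (z.im * Complex.I * inner ℂ w (x : H)) = 0 := by
    simp [h2]
  rw [this]
  nlinarith [sq_nonneg ‖(z.im * Complex.I) • (x : H)‖]

theorem aux_perturb (T B : H →ₗ.[ℂ] H) (hle : T.domain ≤ B.domain) (z : ℂ) (R : H →L[ℂ] H)
    (hR : IsResolventOf T z R) (q d : ℝ) (hq0 : 0 ≤ q) (hq : q < 1) (hd : 0 < d)
    (hB : ∀ x : T.domain, ‖B ⟨(x : H), hle x.2⟩‖ ≤ q * ‖T x - z • (x : H)‖)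
    (hT : ∀ x : T.domain, d * ‖(x : H)‖ ≤ ‖T x - z • (x : H)‖) :
    ∃ S : H →L[ℂ] H, IsResolventOf (pmSum T B hle) z S ∧ ‖S‖ ≤ ((1 - q) * d)⁻¹ := by
  have hmem : ∀ y, R y ∈ T.domain := fun y => (hR.2 y).1
  have hTR : ∀ y, T ⟨R y, hmem y⟩ - z • (R y) = y := fun y => (hR.2 y).2
  let K0 : H →ₗ[ℂ] H :=
    B.toFun.comp ((Submodule.inclusion hle).comp (LinearMap.codRestrict T.domain (R : H →ₗ[ℂ] H) hmem))
  have hK0 : ∀ y, ‖K0 y‖ ≤ q * ‖y‖ := by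
    intro y
    have := hB ⟨R y, hmem y⟩
    simp only [hTR] at this
    exact this
  let K : H →L[ℂ] H := K0.mkContinuous q hK0
  have hK : ∀ x (hx : R x ∈ B.domain), K x = B ⟨R x, hx⟩ := fun x hx => rfl
  have hKn : ‖K‖ ≤ q := K0.mkContinuous_norm_le hq0 hK0
  let U := Units.oneSub (-K) (by rw [norm_neg]; linarith)
  have hU : ∀ y, (U : H →L[ℂ] H) y = y + K y := by
    intro y; simp [U]
  have hU1 : ∀ y, (U : H →L[ℂ] H) ((↑U⁻¹ : H →L[ℂ] H) y) = y := by
    intro y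
    exact congrArg (fun L : H →L[ℂ] H => L y) (Units.mul_inv U)
  have hU2 : ∀ y, (↑U⁻¹ : H →L[ℂ] H) ((U : H →L[ℂ] H) y) = y := by
    intro y
    exact congrArg (fun L : H →L[ℂ] H => L y) (Units.inv_mul U)
  have hA : ∀ x : T.domain, (pmSum T B hle) x = T x + B ⟨x, hle x.2⟩ := fun x => rfl
  let S : H →L[ℂ] H := R * (↑U⁻¹ : H →L[ℂ] H)
  have hS2 : ∀ y : H, ∃ hy : S y ∈ (pmSum T B hle).domain,
      (pmSum T B hle) ⟨S y, hy⟩ - z • (S y) = y := by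
    intro y
    set v := (↑U⁻¹ : H →L[ℂ] H) y with hv
    have hSv : S y = R v := rfl
    rw [hSv]
    refine ⟨hmem v, ?_⟩
    have h := hU1 y
    rw [← hv, hU, hK v (hle (hmem v))] at h
    have h3 := hTR v
    refine Eq.trans ?_ h
    change T ⟨R v, hmem v⟩ + B ⟨R v, hle (hmem v)⟩ - z • R v = _
    rw [add_sub_right_comm, h3]
  refine ⟨S, ⟨?_, hS2⟩, ?_⟩
  · intro x
    change R ((↑U⁻¹ : H →L[ℂ] H) _) = _
    have h1 := hR.1 x
    have : (pmSum T B hle) x - z • (x : H) = (U : H →L[ℂ] H) (T x - z • (x : H)) := by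
      rw [hU, hK _ (hle (hmem _))]
      simp only [h1]
      rw [hA x]; abel
    rw [this, hU2, h1]
  · refine S.opNorm_le_bound (by have : 0 < 1 - q := by linarith
                                 positivity) fun y => ?_
    obtain ⟨hy, hy'⟩ := hS2 y
    have h1 := hT ⟨S y, hy⟩
    have h2 := hB ⟨S y, hy⟩
    change T ⟨S y, hy⟩ + B ⟨S y, hle hy⟩ - z • S y = y at hy'
    change d * ‖S y‖ ≤ ‖T ⟨S y, hy⟩ - z • S y‖ at h1
    change ‖B ⟨S y, hle hy⟩‖ ≤ q * ‖T ⟨S y, hy⟩ - z • S y‖ at h2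
    have h3 : T ⟨S y, hy⟩ - z • S y = y - B ⟨S y, hle hy⟩ := by
      rw [eq_sub_iff_add_eq, ← add_sub_right_comm]
      exact hy'
    have h4 : ‖T ⟨S y, hy⟩ - z • S y‖ ≤ ‖y‖ + ‖B ⟨S y, hle hy⟩‖ := by
      rw [h3]; exact norm_sub_le _ _
    have h1q : 0 < 1 - q := by linarith
    rw [inv_mul_eq_div, le_div_iff₀ (by positivity)]
    nlinarith [mul_le_mul_of_nonneg_left h1 h1q.le]

theorem aux_limit (p b b₁ e M q : ℝ) (hp : p ∈ Set.Ico (0 : ℝ) 1) (hM : p = 0 → M = 0)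
    (he : 0 < e) (hq : b < q * e) :
    ∀ᶠ ρ : ℝ in Filter.atTop, b * (ρ + b₁ * ρ ^ p) ^ p + M ≤ q * (e * ρ ^ p) := by
  rcases eq_or_lt_of_le hp.1 with h0 | h0
  · subst h0
    filter_upwards with ρ
    simp [hM rfl]; linarith
  · have t1 : Filter.Tendsto (fun ρ : ℝ => ρ ^ (-(1 - p))) Filter.atTop (nhds 0) :=
      tendsto_rpow_neg_atTop (by linarith [hp.2])
    have t2 : Filter.Tendsto (fun ρ : ℝ => ρ ^ (-p)) Filter.atTop (nhds 0) :=
      tendsto_rpow_neg_atTop h0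
    have t3 : Filter.Tendsto (fun ρ : ℝ => b * (1 + b₁ * ρ ^ (-(1 - p))) ^ p + M * ρ ^ (-p))
        Filter.atTop (nhds (b * (1 + b₁ * 0) ^ p + M * 0)) := by
      refine Filter.Tendsto.add (Filter.Tendsto.const_mul _ ?_) (t2.const_mul _)
      exact ((t1.const_mul _).const_add _).rpow_const (Or.inr h0.le)
    have t4 : Filter.Tendsto (fun ρ : ℝ => 1 + b₁ * ρ ^ (-(1 - p)))
        Filter.atTop (nhds (1 + b₁ * 0)) := (t1.const_mul _).const_add _
    have e1 := t3.eventually_le_const (u := q * e) (by simpa using hq)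
    have e2 := t4.eventually_const_le (u := 0) (by simp)
    filter_upwards [e1, e2, Filter.eventually_gt_atTop 0] with ρ h1 h2 h3
    have hk : ρ + b₁ * ρ ^ p = ρ * (1 + b₁ * ρ ^ (-(1 - p))) := by
      have : ρ ^ p = ρ * ρ ^ (-(1 - p)) := by
        nth_rewrite 2 [← Real.rpow_one ρ]
        rw [← Real.rpow_add h3]; congr 1; ring
      rw [this]; ring
    have hk2 : ρ ^ p * ρ ^ (-p) = 1 := by
      rw [← Real.rpow_add h3]; simp
    rw [hk, Real.mul_rpow h3.le h2]
    have hpos : 0 < ρ ^ p := Real.rpow_pos_of_pos h3 p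
    calc _ = ρ ^ p * (b * (1 + b₁ * ρ ^ (-(1 - p))) ^ p + M * ρ ^ (-p)) := by
            linear_combination (-M) * hk2
      _ ≤ ρ ^ p * (q * e) := by gcongr
      _ = _ := by ring

theorem aux_eps (p b₁ t : ℝ) (hp : p ∈ Set.Ico (0 : ℝ) 1) (hb₁ : 0 < b₁) (ht : 0 < t)
    (h : b₁ * t ^ p ≤ t) : b₁ * (b₁ ^ (1 - p)⁻¹) ^ p ≤ b₁ * t ^ p := by
  have h1p : 0 < 1 - p := by linarith [hp.2]
  have h1 : b₁ ≤ t ^ (1 - p) := by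
    rw [Real.rpow_sub ht, Real.rpow_one, le_div_iff₀ (Real.rpow_pos_of_pos ht p)]
    exact h
  have h2 : b₁ ^ (1 - p)⁻¹ ≤ t := by
    calc _ ≤ (t ^ (1 - p)) ^ (1 - p)⁻¹ := Real.rpow_le_rpow hb₁.le h1 (by positivity)
      _ = t := Real.rpow_rpow_inv ht.le h1p.ne'
  gcongr
  exact hp.1

theorem aux_growth (r : ℤ → ℝ) (p b₁ : ℝ) (hp : p ∈ Set.Ico (0 : ℝ) 1) (hb₁ : 0 < b₁)
    (hmono : StrictMono r)
    (hstep : ∀ k, b₁ * |r k| ^ p + b₁ * |r (k + 1)| ^ p ≤ r (k + 1) - r k) (P : ℝ → Prop)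
    (hP : ∀ᶠ ρ in Filter.atTop, P ρ) : ∃ N : ℕ, ∀ k : ℤ, (N : ℤ) ≤ |k| → P |r k| := by
  set s := b₁ * (b₁ ^ (1 - p)⁻¹) ^ p with hs
  have hspos : 0 < s := by positivity
  have hnn : ∀ k, 0 ≤ b₁ * |r k| ^ p := fun k => by positivity
  have hpos : ∀ k, 0 ≤ r k → s ≤ r (k + 1) - r k := by
    intro k hk
    have h1 := hmono (show k < k + 1 by lia)
    have h2 : |r (k + 1)| = r (k + 1) := abs_of_nonneg (by linarith)
    have h3 := hstep k
    have h4 := aux_eps p b₁ |r (k + 1)| hp hb₁ (by rw [h2]; linarith)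
      (by linarith [hnn k])
    linarith [hnn k]
  have hneg : ∀ k, r (k + 1) ≤ 0 → s ≤ r (k + 1) - r k := by
    intro k hk
    have h1 := hmono (show k < k + 1 by lia)
    have h2 : |r k| = - r k := abs_of_nonpos (by linarith)
    have h3 := hstep k
    have h4 := aux_eps p b₁ |r k| hp hb₁ (by rw [h2]; linarith)
      (by linarith [hnn (k + 1)])
    linarith [hnn (k + 1)]
  have h2step : ∀ k, s ≤ r (k + 2) - r k := by
    intro k
    have h1 := hmono (show k < k + 1 by lia)
    have h2 := hmono (show k + 1 < k + 2 by lia)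
    rcases le_total 0 (r (k + 1)) with h | h
    · have := hpos (k + 1) h
      rw [show k + 1 + 1 = k + 2 by ring] at this
      linarith
    · have := hneg k h
      linarith
  have hf : Monotone (fun k : ℤ => r (2 * k) - s * k) := by
    refine monotone_int_of_le_succ fun k => ?_
    have := h2step (2 * k)
    rw [show 2 * (k + 1) = 2 * k + 2 by ring]
    push_cast
    linarith
  obtain ⟨K, hK⟩ := Filter.eventually_atTop.mp hP
  obtain ⟨n, hn⟩ := exists_nat_ge ((K + |r 0|) / s)
  rw [div_le_iff₀ hspos] at hn
  refine ⟨2 * n, fun k hk => hK _ ?_⟩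
  push_cast at hk
  rcases le_abs.mp hk with h | h
  · have h1 := hmono.monotone h
    have h2 := hf (show (0 : ℤ) ≤ n by positivity)
    simp at h2
    have := neg_abs_le (r 0)
    exact le_trans (by linarith) (le_abs_self _)
  · have h1 := hmono.monotone (show k ≤ 2 * (-(n : ℤ)) by lia)
    have h2 := hf (show -(n : ℤ) ≤ 0 by lia)
    simp at h2 h1
    have := le_abs_self (r 0)
    exact le_trans (by linarith) (neg_le_abs _)

/-- Let `T` be self-adjoint with spectrum in the pairwise disjoint intervals
`Δ_k = [α_{2k−1}, α_{2k}]`, `k ∈ ℤ`, whose gaps satisfy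
`α_{2k+1} − α_{2k} ≥ 2^{1−p} b₁ |α_{2k+1} + α_{2k}|^p` with `b₁ > 0`, `p ∈ [0,1)`.  Let `B` be
`p`-subordinate to `T` with subordination bound `b' < b₁`, and `A = T + B`.  Then for every
`δ ∈ (0, b₁ − b')` there are `N ∈ ℕ` and `C > 0` such that for all `|k| ≥ N` the vertical strip
`Ω_k = {|Re λ − r_k| ≤ δ|r_k|^p}`, `r_k = (α_{2k} + α_{2k+1})/2`, lies in the resolvent set of
`A` with `‖(A − λ)⁻¹‖ ≤ C·|r_k|^{−p}` there. -/
theorem stmt19 (T B : H →ₗ.[ℂ] H) (p b₁ b' : ℝ) (hp : p ∈ Set.Ico (0 : ℝ) 1) (hb₁ : 0 < b₁)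
    (hsa : IsSelfAdjoint T) (α : ℤ → ℝ) (hmono : Monotone α)
    (hdisj : ∀ k l : ℤ, k ≠ l →
      Disjoint (Set.Icc (α (2 * k - 1)) (α (2 * k))) (Set.Icc (α (2 * l - 1)) (α (2 * l))))
    (hgap : ∀ k : ℤ,
      (2 : ℝ) ^ (1 - p) * b₁ * |α (2 * k + 1) + α (2 * k)| ^ p ≤ α (2 * k + 1) - α (2 * k))
    (hspec : pmSpectrum T ⊆ ⋃ k : ℤ, Complex.ofReal '' Set.Icc (α (2 * k - 1)) (α (2 * k)))
    (hle : T.domain ≤ B.domain) (hb' : IsGLB (SubordSet T B hle p) b') (hbb : b' < b₁) :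
    ∀ δ : ℝ, 0 < δ → δ < b₁ - b' →
      ∃ (N : ℕ) (C : ℝ), 0 < C ∧
        ∀ k : ℤ, (N : ℤ) ≤ |k| →
          ∀ z : ℂ, |z.re - (α (2 * k) + α (2 * k + 1)) / 2| ≤
              δ * |(α (2 * k) + α (2 * k + 1)) / 2| ^ p →
            ∃ R : H →L[ℂ] H, IsResolventOf (pmSum T B hle) z R ∧
              ‖R‖ ≤ C * (|(α (2 * k) + α (2 * k + 1)) / 2| ^ p)⁻¹ := by
  intro δ hδ hδb
  obtain ⟨b, ⟨hb0, M, hM, hM0, hsub⟩, hbe⟩ : ∃ b ∈ SubordSet T B hle p, b < b₁ - δ := by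
    by_contra hcon
    push Not at hcon
    have := hb'.2 hcon
    linarith
  set e := b₁ - δ with he
  have hepos : 0 < e := by linarith
  obtain ⟨q, hq1, hq2⟩ : ∃ q, b / e < q ∧ q < 1 := exists_between ((div_lt_one hepos).mpr hbe)
  have hq0 : 0 ≤ q := le_trans (by positivity) hq1.le
  rw [div_lt_iff₀ hepos] at hq1
  let r : ℤ → ℝ := fun k => (α (2 * k) + α (2 * k + 1)) / 2
  have hgap' : ∀ k, b₁ * |r k| ^ p ≤ (α (2 * k + 1) - α (2 * k)) / 2 := by
    intro k
    have h := hgap k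
    have h1 : α (2 * k + 1) + α (2 * k) = 2 * r k := by simp only [r]; ring
    rw [h1, abs_mul, Real.mul_rpow (by positivity) (by positivity), abs_two] at h
    have h2 : (2 : ℝ) ^ (1 - p) * 2 ^ p = 2 := by
      rw [← Real.rpow_add two_pos]; simp
    have h3 : (2 : ℝ) ^ (1 - p) * b₁ * (2 ^ p * |r k| ^ p) = 2 * (b₁ * |r k| ^ p) := by
      linear_combination (b₁ * |r k| ^ p) * h2
    linarith
  have hlt : ∀ k : ℤ, α (2 * k) < α (2 * k + 1) := by
    intro k
    refine lt_of_le_of_ne (hmono (by lia)) fun heq => ?_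
    have hd := Set.disjoint_left.mp (hdisj k (k + 1) (by lia))
      (show α (2 * k) ∈ _ from ⟨hmono (by lia), le_rfl⟩)
    apply hd
    refine ⟨?_, hmono (by lia)⟩
    rw [show 2 * (k + 1) - 1 = 2 * k + 1 by ring, heq]
  have hstep : ∀ k, (α (2 * k + 1) - α (2 * k)) / 2 +
      (α (2 * (k + 1) + 1) - α (2 * (k + 1))) / 2 ≤ r (k + 1) - r k := by
    intro k
    have := hmono (show 2 * k + 1 ≤ 2 * (k + 1) by lia)
    simp only [r]; linarith
  have hrm : StrictMono r := by
    refine strictMono_int_of_lt_succ fun k => ?_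
    have := hstep k
    have := hlt k
    have := hlt (k + 1)
    linarith
  obtain ⟨N, hN⟩ := aux_growth r p b₁ hp hb₁ hrm
    (fun k => by linarith [hstep k, hgap' k, hgap' (k + 1)]) _
    ((aux_limit p b b₁ e M q hp hM0 hepos hq1).and (Filter.eventually_gt_atTop 0))
  refine ⟨N, ((1 - q) * e)⁻¹, by have : 0 < 1 - q := by linarith
                                 positivity, ?_⟩
  intro k hk z hz
  obtain ⟨hlim, hρ⟩ := hN k hk
  change |z.re - r k| ≤ δ * |r k| ^ p at hz
  change ∃ R : H →L[ℂ] H, _ ∧ ‖R‖ ≤ _ * (|r k| ^ p)⁻¹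
  set ρ := |r k| with hρdef
  have hρp : 0 < ρ ^ p := Real.rpow_pos_of_pos hρ p
  set d := e * ρ ^ p with hd
  have hdpos : 0 < d := by positivity
  have hball : ∀ w : ℂ, |w.re - z.re| < d → ∃ S, IsResolventOf T w S := by
    intro w hw
    by_contra hcon
    have hmem := hspec (show w ∈ pmSpectrum T from hcon)
    simp only [Set.mem_iUnion, Set.mem_image] at hmem
    obtain ⟨l, t, ⟨ht1, ht2⟩, rfl⟩ := hmem
    simp only [Complex.ofReal_re] at hw
    have hg := hgap' k
    have hr : r k = (α (2 * k) + α (2 * k + 1)) / 2 := rfl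
    rw [abs_lt] at hw
    rw [abs_le] at hz
    have hdd : d + δ * ρ ^ p = b₁ * ρ ^ p := by rw [hd, he]; ring
    rcases le_or_gt l k with hl | hl
    · have := hmono (show 2 * l ≤ 2 * k by lia)
      linarith
    · have := hmono (show 2 * k + 1 ≤ 2 * l - 1 by lia)
      linarith
  obtain ⟨Rc, hRc⟩ := hball (z.re : ℂ) (by simpa using hdpos)
  obtain ⟨Rz, hRz⟩ := hball z (by simpa using hdpos)
  have hRcn := aux_resolvent_norm hsa z.re d hdpos Rc hRc (fun w hw => hball w (by
    refine lt_of_le_of_lt ?_ hw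
    simpa using Complex.abs_re_le_norm (w - z.re)))
  have hTc : ∀ x : T.domain, d * ‖(x : H)‖ ≤ ‖T x - (z.re : ℂ) • (x : H)‖ := by
    intro x
    have h := Rc.le_of_opNorm_le hRcn (T x - (z.re : ℂ) • (x : H))
    rw [hRc.1 x, inv_mul_eq_div, le_div_iff₀ hdpos] at h
    linarith
  have hTz : ∀ x : T.domain, d * ‖(x : H)‖ ≤ ‖T x - z • (x : H)‖ :=
    fun x => (hTc x).trans (aux_norm_re hsa z x)
  have hzre : |z.re| ≤ ρ + δ * ρ ^ p := by
    have := abs_add_le (z.re - r k) (r k)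
    rw [sub_add_cancel] at this
    linarith
  have hBq : ∀ x : T.domain, ‖B ⟨(x : H), hle x.2⟩‖ ≤ q * ‖T x - z • (x : H)‖ := by
    intro x
    refine (hsub x).trans ?_
    set Y := ‖T x - z • (x : H)‖ with hY
    have hY0 : 0 ≤ Y := norm_nonneg _
    have hx : ‖(x : H)‖ ≤ Y / d := by rw [le_div_iff₀ hdpos]; linarith [hTz x]
    set D := ρ + b₁ * ρ ^ p with hD
    have hDpos : 0 < D := by positivity
    have hTx : ‖T x‖ ≤ D * (Y / d) := by
      have h1 : ‖T x‖ ≤ ‖T x - (z.re : ℂ) • (x : H)‖ + |z.re| * ‖(x : H)‖ := by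
        have := norm_add_le (T x - (z.re : ℂ) • (x : H)) ((z.re : ℂ) • (x : H))
        rw [sub_add_cancel, norm_smul, Complex.norm_real, Real.norm_eq_abs] at this
        exact this
      have h2 := aux_norm_re hsa z x
      calc ‖T x‖ ≤ Y + |z.re| * ‖(x : H)‖ := by linarith
        _ ≤ Y + (ρ + δ * ρ ^ p) * (Y / d) := by gcongr
        _ = D * (Y / d) := by
          have : Y = d * (Y / d) := by field_simp
          have h5 : D = d + (ρ + δ * ρ ^ p) := by rw [hD, hd, he]; ring
          rw [h5]
          linear_combination this
    have hYd : 0 ≤ Y / d := by positivity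
    have hpow : (Y / d) ^ p * (Y / d) ^ (1 - p) = Y / d := by
      rw [← Real.rpow_add_of_nonneg hYd hp.1 (by linarith [hp.2])]; simp
    have h1p : 0 ≤ 1 - p := by linarith [hp.2]
    have hp0 := hp.1
    calc b * ‖T x‖ ^ p * ‖(x : H)‖ ^ (1 - p) + M * ‖(x : H)‖
        ≤ b * (D * (Y / d)) ^ p * (Y / d) ^ (1 - p) + M * (Y / d) := by gcongr
      _ = (b * D ^ p + M) * (Y / d) := by
        rw [Real.mul_rpow hDpos.le hYd]
        linear_combination (b * D ^ p) * hpow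
      _ ≤ (q * d) * (Y / d) := by gcongr
      _ = q * Y := by field_simp
  obtain ⟨S, hS, hSn⟩ := aux_perturb T B hle z Rz hRz q d hq0 hq2 hdpos hBq hTz
  refine ⟨S, hS, hSn.trans (le_of_eq ?_)⟩
  rw [hd, ← mul_assoc, mul_inv]
end
end
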